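/- arXiv:2512.12275 — 2 statements merged into one kernel-verified Lean document; each statement's English description precedes it below -/
import Mathlib

section
/- For every n ≥ 2, the polynomial R_n(x) has −1 as a root of multiplicity exactly ⌊(n−2)/2⌋; that is, (1+x)^{⌊(n−2)/2⌋} divides R_n(x) and the quotient polynomial does not vanish at x = −1. -/
open Finset Polynomial

/-- The word `π_1 π_2 ⋯ π_n` of a permutation of `[n] = {1,…,n}`, as a function `ℕ → ℤ`,
with the convention that positions outside `{1,…,n}` (in particular position `0`) get value `0`. -/
def permWord (n : ℕ) (σ : Equiv.Perm (Fin n)) : ℕ → ℤ := fun i =>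
  if h : 1 ≤ i ∧ i ≤ n then ((σ ⟨i - 1, by omega⟩ : ℕ) : ℤ) + 1 else 0

/-- A word changes direction at index `i`. -/
def changesDir (w : ℕ → ℤ) (i : ℕ) : Prop :=
  (w (i - 1) < w i ∧ w (i + 1) < w i) ∨ (w i < w (i - 1) ∧ w i < w (i + 1))

instance (w : ℕ → ℤ) : DecidablePred (changesDir w) := fun i => by
  unfold changesDir; infer_instance

/-- The number of alternating runs of a permutation of `[n]`:
one plus the number of indices `i ∈ {2,…,n-1}` where the word changes direction. -/
def runA (n : ℕ) (σ : Equiv.Perm (Fin n)) : ℕ :=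
  1 + ((Finset.Icc 2 (n - 1)).filter (changesDir (permWord n σ))).card

/-- The run polynomial `R_n(x) = ∑_{σ ∈ S_n} x^{run σ}`. -/
noncomputable def runPoly (n : ℕ) : Polynomial ℤ :=
  ∑ σ : Equiv.Perm (Fin n), X ^ runA n σ

/-- `altChain w b l` holds if the values of `w` along the index list `l` alternate,
starting with a strict descent if `b = true` (resp. ascent if `b = false`). -/
def altChain (w : ℕ → ℤ) : Bool → List ℕ → Prop
  | _, [] => True
  | _, [_] => True
  | b, i :: j :: rest => (if b then w j < w i else w i < w j) ∧ altChain w (!b) (j :: rest)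

/-- `las n σ` : the maximum length of an alternating subsequence
`σ_{i₁} > σ_{i₂} < σ_{i₃} > ⋯` (indices strictly increasing) of `σ`. -/
noncomputable def las (n : ℕ) (σ : Equiv.Perm (Fin n)) : ℕ :=
  sSup {k | ∃ l : List ℕ, l.length = k ∧ l.Chain' (· < ·) ∧
    (∀ i ∈ l, 1 ≤ i ∧ i ≤ n) ∧ altChain (permWord n σ) true l}

/-- The set of peaks of a permutation: indices `i ∈ {2,…,n-1}` with `σ_{i-1} < σ_i > σ_{i+1}`. -/
def peakSet (n : ℕ) (σ : Equiv.Perm (Fin n)) : Finset ℕ :=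
  (Finset.Icc 2 (n - 1)).filter fun i =>
    permWord n σ (i - 1) < permWord n σ i ∧ permWord n σ (i + 1) < permWord n σ i

/-- The set of valleys of a permutation: indices `i ∈ {2,…,n-1}` with `σ_{i-1} > σ_i < σ_{i+1}`. -/
def valleySet (n : ℕ) (σ : Equiv.Perm (Fin n)) : Finset ℕ :=
  (Finset.Icc 2 (n - 1)).filter fun i =>
    permWord n σ i < permWord n σ (i - 1) ∧ permWord n σ i < permWord n σ (i + 1)

/-- The set of left peaks of a permutation: indices `i ∈ {1,…,n-1}` with
`σ_{i-1} < σ_i > σ_{i+1}`, with the convention `σ_0 = 0`. -/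
def leftPeakSet (n : ℕ) (σ : Equiv.Perm (Fin n)) : Finset ℕ :=
  (Finset.Icc 1 (n - 1)).filter fun i =>
    permWord n σ (i - 1) < permWord n σ i ∧ permWord n σ (i + 1) < permWord n σ i

/-- The number of descents of a permutation of `[n]`. -/
def desA (n : ℕ) (σ : Equiv.Perm (Fin n)) : ℕ :=
  ((Finset.Icc 1 (n - 1)).filter fun i => permWord n σ (i + 1) < permWord n σ i).card

/-- The maximum letter (as a natural number, `0` for the empty word) of `w₂`, the longest
suffix of `w_1 ⋯ w_{i-1}` all of whose letters exceed `w i`. -/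
def w2Max (w : ℕ → ℤ) (i : ℕ) : ℕ :=
  ((Finset.Ico 1 i).filter fun j => ∀ t ∈ Finset.Ico j i, w i < w t).sup fun j => (w j).toNat

/-- The maximum letter (as a natural number, `0` for the empty word) of `w₄`, the longest
prefix of `w_{i+1} ⋯ w_n` all of whose letters exceed `w i`. -/
def w4Max (n : ℕ) (w : ℕ → ℤ) (i : ℕ) : ℕ :=
  ((Finset.Ioc i n).filter fun j => ∀ t ∈ Finset.Ioc i j, w i < w t).sup fun j => (w j).toNat

/-- André permutation of `[n]`: no double descent, no final descent, and for every
`i ∈ {2,…,n-1}`, in the `π_i`-factorization the maximum letter of `w₂` is smaller than the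
maximum letter of `w₄` (maximum of the empty word being `0`). -/
def IsAndre (n : ℕ) (σ : Equiv.Perm (Fin n)) : Prop :=
  (∀ i ∈ Finset.Icc 2 (n - 1),
      ¬(permWord n σ i < permWord n σ (i - 1) ∧ permWord n σ (i + 1) < permWord n σ i)) ∧
  permWord n σ (n - 1) < permWord n σ n ∧
  ∀ i ∈ Finset.Icc 2 (n - 1), w2Max (permWord n σ) i < w4Max n (permWord n σ) i

/-- `d_{n,i}` : the number of André permutations of `[n]` with exactly `i` descents. -/
noncomputable def andreCount (n i : ℕ) : ℕ :=
  Nat.card {σ : Equiv.Perm (Fin n) // IsAndre n σ ∧ desA n σ = i}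

/-- A signed permutation of length `n`: a permutation of `[n]` together with a sign for
each position. -/
abbrev SignedPerm (n : ℕ) := Equiv.Perm (Fin n) × (Fin n → Bool)

/-- The word `π_1 π_2 ⋯ π_n` of a signed permutation, as a function `ℕ → ℤ`, with the
convention that positions outside `{1,…,n}` (in particular position `0`) get value `0`. -/
def signedWord (n : ℕ) (π : SignedPerm n) : ℕ → ℤ := fun i =>
  if h : 1 ≤ i ∧ i ≤ n then
    (if π.2 ⟨i - 1, by omega⟩ then -(((π.1 ⟨i - 1, by omega⟩ : ℕ) : ℤ) + 1)
      else ((π.1 ⟨i - 1, by omega⟩ : ℕ) : ℤ) + 1)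
  else 0

/-- `run_B` : one plus the number of indices `i ∈ {1,…,n-1}` where the word
`0 π_1 ⋯ π_n` changes direction. -/
def runB (n : ℕ) (π : SignedPerm n) : ℕ :=
  1 + ((Finset.Icc 1 (n - 1)).filter (changesDir (signedWord n π))).card

/-- `des_B` : the number of indices `i ∈ {0,…,n-1}` with `π_i > π_{i+1}`, where `π_0 = 0`. -/
def desB (n : ℕ) (π : SignedPerm n) : ℕ :=
  ((Finset.range n).filter fun i => signedWord n π (i + 1) < signedWord n π i).card

/-- The set of valleys of a signed permutation: indices `i ∈ {1,…,n-1}` with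
`π_{i-1} > π_i < π_{i+1}`, with the convention `π_0 = 0`. -/
def valleysB (n : ℕ) (π : SignedPerm n) : Finset ℕ :=
  (Finset.Icc 1 (n - 1)).filter fun i =>
    signedWord n π i < signedWord n π (i - 1) ∧ signedWord n π i < signedWord n π (i + 1)

/-- The maximum letter of `w₂` (as an element of `WithBot ℤ`, empty word giving `⊥ = -∞`). -/
def w2MaxB (w : ℕ → ℤ) (i : ℕ) : WithBot ℤ :=
  ((Finset.Ico 1 i).filter fun j => ∀ t ∈ Finset.Ico j i, w i < w t).sup fun j =>
    (w j : WithBot ℤ)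

/-- The maximum letter of `w₄` (as an element of `WithBot ℤ`, empty word giving `⊥ = -∞`). -/
def w4MaxB (n : ℕ) (w : ℕ → ℤ) (i : ℕ) : WithBot ℤ :=
  ((Finset.Ioc i n).filter fun j => ∀ t ∈ Finset.Ioc i j, w i < w t).sup fun j =>
    (w j : WithBot ℤ)

/-- Type B André permutation: no double descent, no final descent, and for every valley `i`,
in the `π_i`-factorization the maximum letter of `w₂` is smaller than the maximum letter of
`w₄` (maximum of the empty word being `-∞`). -/
def IsAndreB (n : ℕ) (π : SignedPerm n) : Prop :=
  (∀ i ∈ Finset.Icc 1 (n - 1),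
      ¬(signedWord n π i < signedWord n π (i - 1) ∧ signedWord n π (i + 1) < signedWord n π i)) ∧
  signedWord n π (n - 1) < signedWord n π n ∧
  ∀ i ∈ valleysB n π, w2MaxB (signedWord n π) i < w4MaxB n (signedWord n π) i

/-- The number of negative letters of a signed permutation. -/
def negCount (n : ℕ) (π : SignedPerm n) : ℕ :=
  (Finset.univ.filter fun i => π.2 i = true).card

/-- `R_n^{B,>}(x)`. -/
noncomputable def runPolyBgt (n : ℕ) : Polynomial ℤ :=
  ∑ π : SignedPerm n, if 0 < signedWord n π 1 then X ^ runB n π else 0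

/-- `R_n^{B,<}(x)`. -/
noncomputable def runPolyBlt (n : ℕ) : Polynomial ℤ :=
  ∑ π : SignedPerm n, if signedWord n π 1 < 0 then X ^ runB n π else 0

/-- `R_n^{B}(x)`. -/
noncomputable def runPolyB (n : ℕ) : Polynomial ℤ :=
  ∑ π : SignedPerm n, X ^ runB n π

/-- `R_n^{D,>}(x)`. -/
noncomputable def runPolyDgt (n : ℕ) : Polynomial ℤ :=
  ∑ π : SignedPerm n, if Even (negCount n π) ∧ 0 < signedWord n π 1 then X ^ runB n π else 0

/-- `R_n^{D,<}(x)`. -/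
noncomputable def runPolyDlt (n : ℕ) : Polynomial ℤ :=
  ∑ π : SignedPerm n, if Even (negCount n π) ∧ signedWord n π 1 < 0 then X ^ runB n π else 0

/-- `R_n^{D}(x)`. -/
noncomputable def runPolyD (n : ℕ) : Polynomial ℤ :=
  ∑ π : SignedPerm n, if Even (negCount n π) then X ^ runB n π else 0

/-- The Eulerian polynomial `A_n(x) = ∑_{σ ∈ S_n} x^{des(σ)+1}`. -/
noncomputable def eulerianA (n : ℕ) : Polynomial ℤ :=
  ∑ σ : Equiv.Perm (Fin n), X ^ (desA n σ + 1)

/-- The type B Eulerian polynomial `B_n(x) = ∑_{π ∈ 𝔅_n} x^{des_B(π)}`. -/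
noncomputable def eulerianB (n : ℕ) : Polynomial ℤ :=
  ∑ π : SignedPerm n, X ^ desB n π

/-- `b̄_{n,k}` : the number of type B André permutations of length `n` with `des_B` equal
to `k`. -/
noncomputable def andreBCountDes (n k : ℕ) : ℕ :=
  Nat.card {π : SignedPerm n // IsAndreB n π ∧ desB n π = k}

/-- `b̂_{n,j}` : the number of type B André permutations of length `n` with exactly `j`
valleys. -/
noncomputable def andreBCountVal (n j : ℕ) : ℕ :=
  Nat.card {π : SignedPerm n // IsAndreB n π ∧ (valleysB n π).card = j}

/-- `d̃_{n,k}` : the number of type D André permutations of length `n` (type B André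
permutations with an even number of negative letters) with exactly `k` valleys. -/
noncomputable def andreDCountVal (n k : ℕ) : ℕ :=
  Nat.card {π : SignedPerm n //
    IsAndreB n π ∧ Even (negCount n π) ∧ (valleysB n π).card = k}

/-- The number of permutations of `[n]` with exactly `j` left peaks. -/
noncomputable def leftPeakCount (n j : ℕ) : ℕ :=
  Nat.card {σ : Equiv.Perm (Fin n) // (leftPeakSet n σ).card = j}

/-- `R_n` evaluated at a real number. -/
noncomputable def runPolyReal (n : ℕ) (x : ℝ) : ℝ :=
  ∑ σ : Equiv.Perm (Fin n), x ^ runA n σ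

/-- `A_n` evaluated at a real number. -/
noncomputable def eulerianAReal (n : ℕ) (x : ℝ) : ℝ :=
  ∑ σ : Equiv.Perm (Fin n), x ^ (desA n σ + 1)

/-- `R_n^{B,>}` evaluated at a real number. -/
noncomputable def runPolyBgtReal (n : ℕ) (x : ℝ) : ℝ :=
  ∑ π : SignedPerm n, if 0 < signedWord n π 1 then x ^ runB n π else 0

/-- `B_n` evaluated at a real number. -/
noncomputable def eulerianBReal (n : ℕ) (x : ℝ) : ℝ :=
  ∑ π : SignedPerm n, x ^ desB n π

/-- Number of changes in the Boolean word `d 0, …, d k`. -/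
def chgC (k : ℕ) (d : ℕ → Bool) : ℕ := ∑ j ∈ Finset.range k, if d j ≠ d (j + 1) then 1 else 0

/-- Descent word after inserting a maximum at position `p`. -/
def insD (d : ℕ → Bool) (p j : ℕ) : Bool :=
  if j + 1 < p then d j else if j + 1 = p then false else if j = p then true else d (j - 1)

theorem chgC_le (k : ℕ) (d : ℕ → Bool) : chgC k d ≤ k := by
  unfold chgC
  calc _ ≤ ∑ j ∈ Finset.range k, 1 := Finset.sum_le_sum (fun j _ => by split_ifs <;> omega)
    _ = k := by simp

theorem chgC_succ (k : ℕ) (d : ℕ → Bool) :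
    chgC (k + 1) d = chgC k d + if d k ≠ d (k + 1) then 1 else 0 := by
  unfold chgC; rw [Finset.sum_range_succ]

theorem chgC_congr (k : ℕ) (d e : ℕ → Bool) (h : ∀ j ≤ k, d j = e j) : chgC k d = chgC k e := by
  unfold chgC
  refine Finset.sum_congr rfl fun j hj => ?_
  have := Finset.mem_range.1 hj
  rw [h j (by omega), h (j + 1) (by omega)]

theorem chgC_ins_big (k : ℕ) (d : ℕ → Bool) (p : ℕ) (h : k + 2 ≤ p) :
    chgC k (insD d p) = chgC k d := by
  apply chgC_congr
  intro j hj
  unfold insD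
  rw [if_pos (by omega)]

theorem insSum {R : Type*} [CommRing R] (x : R) (d : ℕ → Bool) (k : ℕ) :
    ∑ p ∈ Finset.range (k + 3), x ^ chgC (k + 1) (insD d p) =
      x ^ chgC k d * ((chgC k d + 1) + 2 * x + ((k : R) - chgC k d) * x ^ 2) := by
  induction k with
  | zero =>
    simp [Finset.sum_range_succ, chgC, insD]
    cases d 0 <;> simp <;> ring
  | succ k ih =>
    have hB : chgC (k + 1) (insD d (k + 2)) = chgC k d + if d k then 1 else 0 := by
      rw [chgC_succ, chgC_ins_big _ _ _ (by omega)]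
      simp [insD]
    have hA : d k = false → chgC (k + 1) (insD d (k + 1)) = chgC k d + 1 := by
      intro h
      rw [chgC_succ]
      congr 1
      · apply chgC_congr
        intro j hj
        unfold insD
        rcases Nat.lt_or_ge j k with h1 | h1
        · rw [if_pos (by omega)]
        · obtain rfl : j = k := by omega
          simp [h]
      · simp [insD]
    have h1 : chgC (k + 1 + 1) (insD d (k + 3)) =
        chgC (k + 1) d + if d (k + 1) then 1 else 0 := by
      rw [chgC_succ, chgC_ins_big _ _ _ (by omega)]
      simp [insD]
    have h2 : chgC (k + 1 + 1) (insD d (k + 2)) = chgC (k + 1) (insD d (k + 2)) + 1 := by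
      rw [chgC_succ]
      simp [insD]
    have h3 : chgC (k + 1 + 1) (insD d (k + 1)) = chgC (k + 1) (insD d (k + 1)) +
        if d (k + 1) then 0 else 1 := by
      rw [chgC_succ]
      have e1 : insD d (k + 1) (k + 1) = true := by simp [insD]
      have e2 : insD d (k + 1) (k + 1 + 1) = d (k + 1) := by
        unfold insD
        rw [if_neg (by omega), if_neg (by omega), if_neg (by omega)]; rfl
      rw [e1, e2]
      cases d (k + 1) <;> simp
    have h4 : ∀ p ∈ Finset.range (k + 1), x ^ chgC (k + 1 + 1) (insD d p) =
        x ^ chgC (k + 1) (insD d p) * x ^ (if d k ≠ d (k + 1) then 1 else 0) := by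
      intro p hp
      have := Finset.mem_range.1 hp
      rw [chgC_succ, pow_add]
      have e1 : insD d p (k + 1) = d k := by
        unfold insD
        rw [if_neg (by omega), if_neg (by omega), if_neg (by omega)]; rfl
      have e2 : insD d p (k + 1 + 1) = d (k + 1) := by
        unfold insD
        rw [if_neg (by omega), if_neg (by omega), if_neg (by omega)]; rfl
      rw [e1, e2]
    rw [Finset.sum_range_succ, Finset.sum_range_succ] at ih
    rw [Finset.sum_range_succ, Finset.sum_range_succ, Finset.sum_range_succ,
      Finset.sum_congr rfl h4, ← Finset.sum_mul, h1, h2, h3, hB]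
    rw [hB] at ih
    have ih' := eq_sub_of_add_eq (eq_sub_of_add_eq ih)
    rw [ih', chgC_succ k d]
    clear ih ih' h1 h2 h3 h4 hB
    generalize chgC (k + 1) (insD d (k + 1)) = a at *
    generalize chgC k d = c at *
    cases hk : d k <;> cases hk1 : d (k + 1) <;> simp [hk] at hA <;> simp [hA] <;> ring

theorem permWord_inj {n : ℕ} (σ : Equiv.Perm (Fin n)) {i j : ℕ} (hi : 1 ≤ i ∧ i ≤ n)
    (hj : 1 ≤ j ∧ j ≤ n) (h : permWord n σ i = permWord n σ j) : i = j := by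
  unfold permWord at h
  rw [dif_pos hi, dif_pos hj] at h
  have h2 : σ ⟨i - 1, by omega⟩ = σ ⟨j - 1, by omega⟩ := by
    apply Fin.ext; omega
  have := congrArg Fin.val (σ.injective h2)
  simp at this
  omega

/-- Descent word of a permutation. -/
def desD (n : ℕ) (σ : Equiv.Perm (Fin n)) (j : ℕ) : Bool :=
  decide (permWord n σ (j + 2) < permWord n σ (j + 1))

theorem runA_eq (k : ℕ) (σ : Equiv.Perm (Fin (k + 2))) :
    runA (k + 2) σ = 1 + chgC k (desD (k + 2) σ) := by
  unfold runA chgC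
  congr 1
  rw [Finset.card_filter]
  symm
  refine Finset.sum_bij (fun j _ => j + 2) ?_ ?_ ?_ ?_
  · intro j hj
    have := Finset.mem_range.1 hj
    rw [Finset.mem_Icc]; omega
  · intro a _ b _ h; omega
  · intro b hb
    have := Finset.mem_Icc.1 hb
    exact ⟨b - 2, Finset.mem_range.2 (by omega), by omega⟩
  · intro j hj
    have := Finset.mem_range.1 hj
    have n1 : permWord (k + 2) σ (j + 1) ≠ permWord (k + 2) σ (j + 2) := fun h => by
      have := permWord_inj σ (by omega) (by omega) h
      omega
    have n2 : permWord (k + 2) σ (j + 2) ≠ permWord (k + 2) σ (j + 3) := fun h => by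
      have := permWord_inj σ (by omega) (by omega) h
      omega
    refine if_congr ?_ rfl rfl
    unfold changesDir desD
    rw [show j + 2 - 1 = j + 1 by omega, show j + 1 + 2 = j + 3 by omega,
      show j + 2 + 1 = j + 3 by omega, show j + 1 + 1 = j + 2 by omega, ne_eq, decide_eq_decide]
    omega

/-- Insert the maximum at position `p`. -/
def insPerm (n : ℕ) (q : Fin (n + 1) × Equiv.Perm (Fin n)) : Equiv.Perm (Fin (n + 1)) :=
  ((finSuccEquiv' q.1).trans (Equiv.optionCongr q.2)).trans (finSuccEquiv' (Fin.last n)).symm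

theorem insPerm_self (n : ℕ) (q : Fin (n + 1) × Equiv.Perm (Fin n)) :
    insPerm n q q.1 = Fin.last n := by
  simp [insPerm]

theorem insPerm_succAbove (n : ℕ) (q : Fin (n + 1) × Equiv.Perm (Fin n)) (i : Fin n) :
    insPerm n q (q.1.succAbove i) = (q.2 i).castSucc := by
  simp [insPerm]

theorem insPerm_bij (n : ℕ) : Function.Bijective (insPerm n) := by
  rw [Fintype.bijective_iff_injective_and_card]
  refine ⟨?_, ?_⟩
  · intro a b h
    have h1 : a.1 = b.1 := by
      apply (insPerm n b).injective
      rw [insPerm_self, ← h, insPerm_self]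
    refine Prod.ext h1 (Equiv.ext fun i => ?_)
    have h2 := insPerm_succAbove n a i
    rw [h, h1, insPerm_succAbove] at h2
    exact (Fin.castSucc_injective n h2).symm
  · simp [Fintype.card_perm, Nat.factorial_succ]

theorem permWord_ins (n : ℕ) (q : Fin (n + 1) × Equiv.Perm (Fin n)) (i : ℕ)
    (hi : 1 ≤ i ∧ i ≤ n + 1) :
    permWord (n + 1) (insPerm n q) i =
      if i < q.1.val + 1 then permWord n q.2 i else if i = q.1.val + 1 then (n : ℤ) + 1
      else permWord n q.2 (i - 1) := by
  have hq := q.1.isLt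
  unfold permWord
  rw [dif_pos hi]
  split_ifs with h1 h2 h3 h4
  · have : (⟨i - 1, by omega⟩ : Fin (n + 1)) = q.1.succAbove ⟨i - 1, by omega⟩ := by
      rw [Fin.succAbove_of_castSucc_lt _ _ (by rw [Fin.lt_def]; simp; omega)]; rfl
    rw [this, insPerm_succAbove]; simp
  · omega
  · have : (⟨i - 1, by omega⟩ : Fin (n + 1)) = q.1 := Fin.ext (by simp; omega)
    rw [this, insPerm_self]; simp
  · have : (⟨i - 1, by omega⟩ : Fin (n + 1)) = q.1.succAbove ⟨i - 1 - 1, by omega⟩ := by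
      rw [Fin.succAbove_of_le_castSucc _ _ (by rw [Fin.le_def]; simp; omega)]
      apply Fin.ext; simp; omega
    rw [this, insPerm_succAbove]; simp
  · omega

theorem permWord_lt (n : ℕ) (σ : Equiv.Perm (Fin n)) (i : ℕ) : permWord n σ i < (n : ℤ) + 1 := by
  unfold permWord
  split_ifs with h
  · have := (σ ⟨i - 1, by omega⟩).isLt
    omega
  · omega

theorem desD_ins (k : ℕ) (q : Fin (k + 2 + 1) × Equiv.Perm (Fin (k + 2))) (j : ℕ) (hj : j ≤ k + 1) :
    desD (k + 2 + 1) (insPerm (k + 2) q) j = insD (desD (k + 2) q.2) q.1 j := by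
  have b1 := permWord_lt (k + 2) q.2
  have hd : ∀ i, desD (k + 2) q.2 i = decide (permWord (k + 2) q.2 (i + 2) <
    permWord (k + 2) q.2 (i + 1)) := fun _ => rfl
  have c1 := b1 (j + 1)
  rw [desD, permWord_ins _ _ _ (by omega), permWord_ins _ _ _ (by omega), insD]
  rcases lt_trichotomy (j + 1) q.1.val with h | h | h
  · rw [if_pos h, if_pos (by omega), if_pos (by omega), hd]
  · rw [if_neg (by omega : ¬ j + 1 < q.1.val), if_pos h, if_neg (by omega), if_pos (by omega),
      if_pos (by omega)]
    rw [decide_eq_false_iff_not]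
    omega
  · rw [if_neg (by omega : ¬ j + 1 < q.1.val), if_neg (by omega : ¬ j + 1 = q.1.val)]
    by_cases h2 : j = q.1.val
    · rw [if_pos h2, if_neg (by omega), if_neg (by omega), if_neg (by omega), if_pos (by omega)]
      rw [decide_eq_true_iff]
      exact b1 _
    · rw [if_neg h2, if_neg (by omega), if_neg (by omega), if_neg (by omega), if_neg (by omega), hd]
      rw [show j + 2 - 1 = j - 1 + 2 by omega, show j + 1 - 1 = j - 1 + 1 by omega]

theorem runPoly_rec (k : ℕ) :
    runPoly (k + 3) = X * (((k + 1 : ℕ) : ℤ[X]) * X + 2) * runPoly (k + 2)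
      + X * (1 - X ^ 2) * derivative (runPoly (k + 2)) := by
  unfold runPoly
  rw [← (insPerm_bij (k + 2)).sum_comp (fun σ => (X : ℤ[X]) ^ runA (k + 3) σ),
    Fintype.sum_prod_type_right, derivative_sum, Finset.mul_sum, Finset.mul_sum,
    ← Finset.sum_add_distrib]
  refine Finset.sum_congr rfl fun τ _ => ?_
  have h : ∀ p : Fin (k + 2 + 1), (X : ℤ[X]) ^ runA (k + 3) (insPerm (k + 2) (p, τ)) =
      X * X ^ chgC (k + 1) (insD (desD (k + 2) τ) p) := by
    intro p
    rw [runA_eq (k + 1), pow_add, pow_one]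
    congr 2
    exact chgC_congr _ _ _ (fun j hj => desD_ins k (p, τ) j hj)
  rw [Finset.sum_congr rfl fun p _ => h p, ← Finset.mul_sum,
    Fin.sum_univ_eq_sum_range (fun p => (X : ℤ[X]) ^ chgC (k + 1) (insD (desD (k + 2) τ) p)),
    insSum, runA_eq]
  rw [derivative_X_pow, Nat.add_sub_cancel_left]
  push_cast
  simp only [map_add, map_one, map_natCast]
  ring

theorem term_rec (k i : ℕ) (hi : i ≤ k + 1) :
    X * (((k + 1 : ℕ) : ℤ[X]) * X + 2) * (X ^ i * (1 + X) ^ (k + 1 - i))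
      + X * (1 - X ^ 2) * derivative ((X : ℤ[X]) ^ i * (1 + X) ^ (k + 1 - i)) =
    (i : ℤ[X]) * (X ^ i * (1 + X) ^ (k + 2 - i)) +
      ((k : ℤ[X]) + 3 - 2 * (i : ℤ[X])) * (X ^ (i + 1) * (1 + X) ^ (k + 1 - i)) := by
  obtain ⟨m, hm⟩ := Nat.exists_eq_add_of_le hi
  rw [show k + 1 - i = m by omega, show k + 2 - i = m + 1 by omega, hm]
  have hk : (k : ℤ[X]) = (i : ℤ[X]) + (m : ℤ[X]) - 1 := by
    have : ((k + 1 : ℕ) : ℤ[X]) = ((i + m : ℕ) : ℤ[X]) := by rw [hm]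
    push_cast at this
    linear_combination this
  have h1 : X * derivative ((X : ℤ[X]) ^ i) = (i : ℤ[X]) * X ^ i := by
    cases i with
    | zero => simp
    | succ i => rw [derivative_X_pow]; simp; ring
  have h2 : (1 + X) * derivative ((1 + X : ℤ[X]) ^ m) = (m : ℤ[X]) * (1 + X) ^ m := by
    cases m with
    | zero => simp
    | succ m => rw [derivative_pow]; simp; ring
  rw [derivative_mul, hk]
  push_cast
  linear_combination (1 - X ^ 2) * (1 + X) ^ m * h1 + X * (1 - X) * X ^ i * h2

theorem runPoly_two : runPoly 2 = 2 * X := by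
  have h : ∀ σ : Equiv.Perm (Fin 2), runA 2 σ = 1 := fun σ => by simp [runA]
  unfold runPoly
  simp [h, Fintype.card_perm]

/-- Basis-type expansion. -/
theorem runPoly_exp (k : ℕ) : ∃ c : ℕ → ℕ, 0 < c ((k + 3) / 2) ∧ (∀ i, (k + 3) / 2 < i → c i = 0) ∧
    runPoly (k + 2) = ∑ i ∈ Finset.range (k + 2),
      (c i : ℤ[X]) * (X ^ i * (1 + X) ^ (k + 1 - i)) := by
  induction k with
  | zero =>
    refine ⟨fun i => if i = 1 then 2 else 0, by simp, ?_, ?_⟩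
    · intro i hi
      simp
      omega
    · simp [Finset.sum_range_succ, runPoly_two]
  | succ k ih =>
    obtain ⟨c, hpos, hzero, hsum⟩ := ih
    refine ⟨fun i => i * c i + if i = 0 then 0 else (k + 5 - 2 * i) * c (i - 1), ?_, ?_, ?_⟩
    · rcases Nat.even_or_odd' k with ⟨t, rfl | rfl⟩
      · rw [show (2 * t + 3) / 2 = t + 1 by omega] at hpos
        rw [show (2 * t + 1 + 3) / 2 = t + 2 by omega]
        simp only [show t + 2 ≠ 0 by omega, if_false, show t + 2 - 1 = t + 1 by omega,
          show 2 * t + 5 - 2 * (t + 2) = 1 by omega]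
        omega
      · rw [show (2 * t + 1 + 3) / 2 = t + 2 by omega] at hpos
        rw [show (2 * t + 1 + 1 + 3) / 2 = t + 2 by omega]
        positivity
    · intro i hi
      simp only []
      rw [hzero i (by omega), if_neg (by omega)]
      by_cases h : (k + 3) / 2 < i - 1
      · rw [hzero _ h]; simp
      · rw [show k + 5 - 2 * i = 0 by omega]; simp
    · rw [show k + 1 + 2 = k + 3 by omega, runPoly_rec, hsum, derivative_sum, Finset.mul_sum,
        Finset.mul_sum, ← Finset.sum_add_distrib]
      have h1 : ∀ i ∈ Finset.range (k + 2),
          X * (((k + 1 : ℕ) : ℤ[X]) * X + 2) * ((c i : ℤ[X]) * (X ^ i * (1 + X) ^ (k + 1 - i)))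
          + X * (1 - X ^ 2) * derivative ((c i : ℤ[X]) * (X ^ i * (1 + X) ^ (k + 1 - i))) =
          ((i * c i : ℕ) : ℤ[X]) * (X ^ i * (1 + X) ^ (k + 2 - i)) +
          (((k + 3 - 2 * i) * c i : ℕ) : ℤ[X]) * (X ^ (i + 1) * (1 + X) ^ (k + 1 - i)) := by
        intro i hi
        have ht := term_rec k i (by have := Finset.mem_range.1 hi; omega)
        have hc : (((k + 3 - 2 * i) * c i : ℕ) : ℤ[X]) = ((k : ℤ[X]) + 3 - 2 * (i : ℤ[X])) * (c i : ℤ[X]) := by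
          by_cases h : (k + 3) / 2 < i
          · rw [hzero _ h]; simp
          · rw [Nat.cast_mul, Nat.cast_sub (by omega)]; push_cast; ring
        rw [hc, derivative_mul, derivative_natCast]
        push_cast at ht ⊢
        linear_combination (c i : ℤ[X]) * ht
      rw [Finset.sum_congr rfl h1, Finset.sum_add_distrib]
      have h2 : ∀ i ∈ Finset.range (k + 3),
          ((i * c i + if i = 0 then 0 else (k + 5 - 2 * i) * c (i - 1) : ℕ) : ℤ[X]) *
            (X ^ i * (1 + X) ^ (k + 1 + 1 - i)) =
          ((i * c i : ℕ) : ℤ[X]) * (X ^ i * (1 + X) ^ (k + 2 - i)) +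
          ((if i = 0 then 0 else (k + 5 - 2 * i) * c (i - 1) : ℕ) : ℤ[X]) *
            (X ^ i * (1 + X) ^ (k + 2 - i)) := by
        intro i _
        rw [Nat.cast_add, add_mul]
      rw [Finset.sum_congr rfl h2, Finset.sum_add_distrib]
      congr 1
      · rw [Finset.sum_range_succ _ (k + 2), hzero (k + 2) (by omega)]
        simp
      · rw [Finset.sum_range_succ' _ (k + 2)]
        rw [if_pos rfl, Nat.cast_zero, zero_mul, add_zero]
        refine Finset.sum_congr rfl fun i _ => ?_
        rw [if_neg (by omega), Nat.add_sub_cancel, show k + 5 - 2 * (i + 1) = k + 3 - 2 * i by omega,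
          show k + 2 - (i + 1) = k + 1 - i by omega]

/-- For `n ≥ 2`, `−1` is a root of `R_n(x)` of multiplicity exactly
`⌊(n−2)/2⌋`: `(1+x)^{⌊(n−2)/2⌋}` divides `R_n(x)` and the quotient does not vanish at
`x = −1`. -/
theorem statement7 (n : ℕ) (hn : 2 ≤ n) :
    ∃ Q : Polynomial ℤ, runPoly n = (1 + X) ^ ((n - 2) / 2) * Q ∧ Q.eval (-1) ≠ 0 := by
  obtain ⟨k, rfl⟩ := Nat.exists_eq_add_of_le' hn
  obtain ⟨c, hpos, hzero, hsum⟩ := runPoly_exp k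
  refine ⟨∑ i ∈ Finset.range ((k + 3) / 2 + 1),
    (c i : ℤ[X]) * (X ^ i * (1 + X) ^ ((k + 3) / 2 - i)), ?_, ?_⟩
  · rw [hsum, Finset.mul_sum]
    symm
    have hsub : Finset.range ((k + 3) / 2 + 1) ⊆ Finset.range (k + 2) :=
      Finset.range_subset_range.2 (by omega)
    rw [← Finset.sum_subset hsub]
    · refine Finset.sum_congr rfl fun i hi => ?_
      have := Finset.mem_range.1 hi
      rw [show k + 1 - i = (k + 2 - 2) / 2 + ((k + 3) / 2 - i) by omega, pow_add]
      ring
    · intro i _ hi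
      have hi2 : (k + 3) / 2 < i := by
        rw [Finset.mem_range] at hi; omega
      rw [hzero i hi2]
      simp
  · rw [Finset.sum_range_succ, eval_add, eval_finsetSum, Finset.sum_eq_zero]
    · simp [hpos.ne']
    · intro i hi
      have := Finset.mem_range.1 hi
      have h0 : (k + 3) / 2 - i ≠ 0 := by omega
      simp [h0]
end

section
/- (Chow–Ma identity) For every n ≥ 1, the polynomial identity x · 2^{n−1} R_{n+1}(x) = 2x R_n^{B,>}(x) + (1+x) Σ_{k=1}^{n−1} C(n,k) R_k^{B,>}(x) R_{n−k}^{B,>}(x) holds, where C(n,k) is the binomial coefficient. -/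
open Finset Polynomial

namespace CM

/-- indicator of a change of direction at `b` in `a b c`. -/
def bump (a b c : ℤ) : ℕ := if (a < b ∧ c < b) ∨ (b < a ∧ b < c) then 1 else 0

/-- number of direction changes of a list. -/
def ch : List ℤ → ℕ
  | a :: b :: c :: l => bump a b c + ch (b :: c :: l)
  | _ => 0

lemma bump_comm (a b c : ℤ) : bump a b c = bump c b a := by
  unfold bump; congr 1; grind

lemma ch_append (l : List ℤ) (a b : ℤ) (r : List ℤ) :
    ch (l ++ a :: b :: r) = ch (l ++ [a, b]) + ch (a :: b :: r) := by
  induction l with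
  | nil => simp [ch]
  | cons x l ih =>
    match l with
    | [] => simp [ch]
    | [y] => simp [ch] at ih ⊢; omega
    | y :: z :: l => simp [ch] at ih ⊢; omega

lemma ch_reverse (l : List ℤ) : ch l.reverse = ch l := by
  induction l with
  | nil => rfl
  | cons x l ih =>
    match l with
    | [] => simp [ch]
    | [y] => simp [ch]
    | y :: z :: l =>
      have h := ch_append l.reverse z y [x]
      simp [ch] at ih h ⊢
      rw [h, ih, bump_comm]; omega

lemma ch_map {φ : ℤ → ℤ} {D : Set ℤ} (hφ : StrictMonoOn φ D) (l : List ℤ)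
    (hl : ∀ z ∈ l, z ∈ D) : ch (l.map φ) = ch l := by
  induction l with
  | nil => rfl
  | cons x l ih =>
    match l with
    | [] => simp [ch]
    | [y] => simp [ch]
    | y :: z :: l =>
      have ih := ih (fun t ht => hl t (List.mem_cons_of_mem _ ht))
      have hx := hl x (by simp)
      have hy := hl y (by simp)
      have hz := hl z (by simp)
      simp only [List.map_cons, ch] at ih ⊢
      rw [ih]
      simp [bump, hφ.lt_iff_lt, hx, hy, hz]

lemma ch_neg (l : List ℤ) : ch (l.map (fun z => -z)) = ch l := by
  induction l with
  | nil => rfl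
  | cons x l ih =>
    match l with
    | [] => simp [ch]
    | [y] => simp [ch]
    | y :: z :: l =>
      simp only [List.map_cons, ch] at ih ⊢
      rw [ih]
      congr 1
      unfold bump; congr 1; grind

/-- same sign of first letters -/
lemma ch_glue (a b : ℤ) (u v : List ℤ) :
    ch ((a :: u).reverse ++ 0 :: b :: v) = ch (0 :: a :: u) + ch (0 :: b :: v) + bump a 0 b := by
  have h1 := ch_append ((a :: u).reverse) 0 b v
  have h2 := ch_append (u.reverse) a 0 [b]
  have h3 := ch_reverse (0 :: a :: u)
  simp [ch] at h1 h2 h3 ⊢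
  rw [h1, h2, h3]; omega

lemma ch_range' (w : ℕ → ℤ) (m a : ℕ) :
    ch ((List.range' a m).map w) = ((Icc (a + 1) (a + m - 2)).filter (changesDir w)).card := by
  induction m generalizing a with
  | zero => simp [ch]
  | succ m ih =>
    match m with
    | 0 => simp [ch]
    | 1 => simp [ch, List.range'_succ]
    | m + 2 =>
      have := ih (a + 1)
      simp only [List.range'_succ, List.map_cons, ch] at this ⊢
      rw [this]
      have e : Icc (a+1) (a + (m + 2 + 1) - 2) = insert (a+1) (Icc (a+1+1) (a + 1 + (m+2) - 2)) := by
        ext i; simp; omega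
      rw [e, filter_insert]
      split_ifs with h
      · rw [card_insert_of_notMem (by simp)]
        have : bump (w a) (w (a+1)) (w (a+1+1)) = 1 := by
          unfold bump; rw [if_pos]; simpa [changesDir] using h
        omega
      · have : bump (w a) (w (a+1)) (w (a+1+1)) = 0 := by
          unfold bump; rw [if_neg]; simpa [changesDir] using h
        omega

/-- The words using each letter of `S` once. -/
def LS (S : Finset ℤ) : Finset (List ℤ) := S.val.lists.toFinset

lemma mem_LS {S : Finset ℤ} {l : List ℤ} :
    l ∈ LS S ↔ l.Nodup ∧ ∀ i, i ∈ l ↔ i ∈ S := by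
  unfold LS
  rw [Multiset.mem_toFinset, Multiset.mem_lists_iff]
  constructor
  · intro h
    have h : S.val = (l : Multiset ℤ) := h
    refine ⟨?_, fun i => ?_⟩
    · rw [← Multiset.coe_nodup, ← h]; exact S.nodup
    · rw [← Multiset.mem_coe, ← h]; rfl
  · rintro ⟨h1, h2⟩
    exact ((Multiset.Nodup.ext (Multiset.coe_nodup.2 h1) S.nodup).2 (fun i => by
        simpa using h2 i)).symm

/-- Signed words with absolute value set `P`. -/
def SL (P : Finset ℕ) : Finset (List ℤ) :=
  (((P.image (fun i : ℕ => (i : ℤ)) ∪ P.image (fun i : ℕ => -(i : ℤ))).powerset.biUnion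
    LS)).filter (fun l => ((l.map Int.natAbs : List ℕ) : Multiset ℕ) = P.val)

lemma mem_SL {P : Finset ℕ} {l : List ℤ} :
    l ∈ SL P ↔ (l.map Int.natAbs).Nodup ∧ ∀ i, i ∈ l.map Int.natAbs ↔ i ∈ P := by
  have key : ((l.map Int.natAbs : List ℕ) : Multiset ℕ) = P.val ↔
      (l.map Int.natAbs).Nodup ∧ ∀ i, i ∈ l.map Int.natAbs ↔ i ∈ P := by
    constructor
    · intro h
      refine ⟨?_, fun i => ?_⟩
      · rw [← Multiset.coe_nodup, h]; exact P.nodup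
      · rw [← Multiset.mem_coe, h]; rfl
    · rintro ⟨h1, h2⟩
      exact (Multiset.Nodup.ext (Multiset.coe_nodup.2 h1) P.nodup).2 (fun i => by
        simpa using h2 i)
  unfold SL
  rw [mem_filter, key, and_iff_right_iff_imp]
  rintro ⟨h1, h2⟩
  rw [mem_biUnion]
  refine ⟨l.toFinset, ?_, ?_⟩
  · rw [mem_powerset]
    intro z hz
    have := (h2 z.natAbs).1 (List.mem_map_of_mem (by simpa using hz))
    simp only [mem_union, mem_image]
    rcases Int.natAbs_eq z with h | h
    · exact Or.inl ⟨_, this, h.symm⟩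
    · exact Or.inr ⟨_, this, h.symm⟩
  · rw [mem_LS]
    have : l.Nodup := List.Nodup.of_map _ h1
    exact ⟨this, by simp⟩

/-- Sign choice. -/
def sT (T : Finset ℕ) (i : ℕ) : ℤ := if i ∈ T then -(i : ℤ) else i

lemma natAbs_sT (T : Finset ℕ) (i : ℕ) : (sT T i).natAbs = i := by
  unfold sT; split_ifs <;> simp

lemma sT_injective (T : Finset ℕ) : Function.Injective (sT T) := fun i j h => by
  rw [← natAbs_sT T i, h, natAbs_sT]

lemma inj_of_mem_SL {P : Finset ℕ} {l : List ℤ} (h : l ∈ SL P) {a b : ℤ} (ha : a ∈ l) (hb : b ∈ l)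
    (hab : a.natAbs = b.natAbs) : a = b :=
  List.inj_on_of_nodup_map (mem_SL.1 h).1 ha hb hab

lemma sum_signs {R : Type*} [AddCommMonoid R] (n : ℕ) (f : List ℤ → R) :
    ∑ T ∈ (Icc 1 n).powerset, ∑ l ∈ LS ((range (n + 1)).image (sT T)), f l =
      ∑ l ∈ SL (range (n + 1)), f l := by
  rw [Finset.sum_sigma']
  refine Finset.sum_bij (fun x _ => x.2) ?_ ?_ ?_ (fun _ _ => rfl)
  · rintro ⟨T, l⟩ h
    simp only [mem_sigma, mem_LS] at h
    obtain ⟨hT, h1, h2⟩ := h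
    rw [mem_SL]
    constructor
    · refine List.Nodup.map_on ?_ h1
      intro a ha b hb hab
      rw [h2, mem_image] at ha hb
      obtain ⟨i, _, rfl⟩ := ha
      obtain ⟨j, _, rfl⟩ := hb
      rw [natAbs_sT, natAbs_sT] at hab
      rw [hab]
    · intro i
      simp only [List.mem_map, h2, mem_image]
      constructor
      · rintro ⟨_, ⟨j, hj, rfl⟩, rfl⟩
        rwa [natAbs_sT]
      · intro hi
        exact ⟨_, ⟨i, hi, rfl⟩, natAbs_sT _ _⟩
  · rintro ⟨T, l⟩ h ⟨T', l'⟩ h' (rfl : l = l')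
    have key : ∀ T : Finset ℕ, (⟨T, l⟩ : (_ : Finset ℕ) × List ℤ) ∈
        ((Icc 1 n).powerset.sigma fun T => LS ((range (n + 1)).image (sT T))) →
        ∀ i, i ∈ T ↔ i ∈ Icc 1 n ∧ -(i : ℤ) ∈ l := by
      intro T h i
      simp only [mem_sigma, mem_LS, mem_powerset] at h
      obtain ⟨hT, h1, h2⟩ := h
      rw [h2, mem_image]
      constructor
      · intro hi
        have := hT hi
        refine ⟨this, i, ?_, by simp [sT, hi]⟩
        simp at this ⊢; omega
      · rintro ⟨hi, j, hj, hij⟩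
        have : j = i := by
          have := congrArg Int.natAbs hij
          simpa [natAbs_sT] using this
        subst this
        by_contra hn
        simp [sT, hn] at hij hi
        omega
    have : T = T' := by
      ext i; rw [key T h, key T' h']
    rw [this]
  · intro l hl
    refine ⟨⟨(Icc 1 n).filter (fun i => -(i : ℤ) ∈ l), l⟩, ?_, rfl⟩
    have hl' := mem_SL.1 hl
    simp only [mem_sigma, mem_LS, mem_powerset]
    refine ⟨filter_subset _ _, List.Nodup.of_map _ hl'.1, fun z => ?_⟩
    rw [mem_image]
    constructor
    · intro hz
      refine ⟨z.natAbs, (hl'.2 _).1 (List.mem_map_of_mem hz), ?_⟩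
      have hz' := (hl'.2 _).1 (List.mem_map_of_mem hz)
      unfold sT
      split_ifs with h
      · exact inj_of_mem_SL hl (mem_filter.1 h).2 hz (by omega)
      · rcases Int.natAbs_eq z with h3 | h3
        · exact h3.symm
        · by_cases h0 : z = 0
          · subst h0; simp
          exfalso; apply h
          simp only [mem_range] at hz'
          refine mem_filter.2 ⟨?_, by rw [← h3]; exact hz⟩
          simp; omega
    · rintro ⟨i, hi, rfl⟩
      rw [← hl'.2, List.mem_map] at hi
      obtain ⟨z, hz, rfl⟩ := hi
      unfold sT
      split_ifs with h
      · exact (mem_filter.1 h).2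
      · have hz' := (hl'.2 _).1 (List.mem_map_of_mem hz)
        rcases Int.natAbs_eq z with h3 | h3
        · rw [← h3]; exact hz
        · by_cases h0 : z = 0
          · subst h0; simpa using hz
          exfalso; apply h
          simp only [mem_range] at hz'
          refine mem_filter.2 ⟨?_, by rw [← h3]; exact hz⟩
          simp; omega

lemma sum_split {R : Type*} [AddCommMonoid R] (n : ℕ) (f : List ℤ → R) :
    ∑ P ∈ (Icc 1 n).powerset, ∑ u ∈ SL P, ∑ v ∈ SL (Icc 1 n \ P), f (u.reverse ++ 0 :: v) =
      ∑ l ∈ SL (range (n + 1)), f l := by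
  simp_rw [← Finset.sum_product']
  rw [Finset.sum_sigma']
  have zero_notMem : ∀ P ⊆ Icc 1 n, ∀ u ∈ SL P, (0 : ℤ) ∉ u := by
    intro P hP u hu h0
    have := hP (((mem_SL.1 hu).2 _).1 (List.mem_map_of_mem h0))
    simp at this
  refine Finset.sum_bij (fun x _ => x.2.1.reverse ++ 0 :: x.2.2) ?_ ?_ ?_ (fun _ _ => rfl)
  · rintro ⟨P, u, v⟩ h
    simp only [mem_sigma, mem_powerset, mem_product] at h ⊢
    obtain ⟨hP, hu, hv⟩ := h
    rw [mem_SL] at hu hv ⊢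
    simp only [List.map_append, List.map_reverse, List.map_cons, Int.natAbs_zero]
    refine ⟨?_, fun i => ?_⟩
    · rw [List.nodup_append, List.nodup_reverse, List.nodup_cons]
      refine ⟨hu.1, ⟨?_, hv.1⟩, ?_⟩
      · rw [hv.2]; simp
      · intro a ha b hb hab
        subst hab
        rw [List.mem_reverse, hu.2] at ha
        rw [List.mem_cons, hv.2, mem_sdiff] at hb
        have := hP ha
        simp at this
        rcases hb with hb | hb
        · omega
        · exact hb.2 ha
    · rw [List.mem_append, List.mem_reverse, List.mem_cons, hu.2, hv.2, mem_sdiff]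
      have := @hP i
      simp at this ⊢
      by_cases hi : i ∈ P
      · simp [hi] at this ⊢; omega
      · simp [hi]; omega
  · rintro ⟨P, u, v⟩ h ⟨P', u', v'⟩ h' heq
    simp only [mem_sigma, mem_powerset, mem_product] at h h' heq
    have hz := zero_notMem _ h.1 _ h.2.1
    have hz2 := zero_notMem _ sdiff_subset _ h.2.2
    have hz' := zero_notMem _ h'.1 _ h'.2.1
    have hz2' := zero_notMem _ sdiff_subset _ h'.2.2
    rw [List.append_cons_inj_of_notMem (by simpa) (by simpa)] at heq
    obtain ⟨h1, -, h2⟩ := heq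
    have h1 := List.reverse_injective h1
    subst h1 h2
    have : P = P' := by
      ext i
      rw [← (mem_SL.1 h.2.1).2, (mem_SL.1 h'.2.1).2]
    rw [this]
  · intro l hl
    have hl' := mem_SL.1 hl
    have h0 : (0 : ℤ) ∈ l := by
      have := (hl'.2 0).2 (by simp)
      simpa using this
    obtain ⟨a, v, rfl, ha⟩ := List.eq_append_cons_of_mem h0
    simp only [List.map_append, List.map_cons, Int.natAbs_zero] at hl'
    obtain ⟨h1, h2⟩ := hl'
    rw [List.nodup_append, List.nodup_cons] at h1
    obtain ⟨n1, ⟨n2, n3⟩, n4⟩ := h1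
    refine ⟨⟨(a.map Int.natAbs).toFinset, a.reverse, v⟩, ?_, by simp⟩
    simp only [mem_sigma, mem_powerset, mem_product, mem_SL]
    have hsub : (a.map Int.natAbs).toFinset ⊆ Icc 1 n := by
      intro i hi
      rw [List.mem_toFinset] at hi
      have := (h2 i).1 (List.mem_append_left _ hi)
      have h3 := n4 i hi 0 (by simp)
      simp at this ⊢; omega
    refine ⟨hsub, ⟨?_, ?_⟩, n3, ?_⟩
    · rw [List.map_reverse, List.nodup_reverse]; exact n1
    · intro i; rw [List.map_reverse, List.mem_reverse, List.mem_toFinset]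
    · intro i
      rw [mem_sdiff, List.mem_toFinset]
      constructor
      · intro hi
        have := (h2 i).1 (by simp only [List.mem_append, List.mem_cons]; tauto)
        refine ⟨?_, fun hi' => n4 i hi' i (List.mem_cons_of_mem _ hi) rfl⟩
        have : i ≠ 0 := fun h => n2 (h ▸ hi)
        simp at *; omega
      · rintro ⟨hi, hi'⟩
        have := (h2 i).2 (by simp at hi ⊢; omega)
        rw [List.mem_append, List.mem_cons] at this
        rcases this with h | h | h
        · exact absurd h hi'
        · simp at hi; omega
        · exact h

lemma exists_mono {α : Type*} [LinearOrder α] [Inhabited α] (S : Finset α) :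
    ∃ (φ : ℕ → α) (ψ : α → ℕ), StrictMonoOn φ (Set.Icc 1 #S) ∧
      (∀ i ∈ Set.Icc 1 #S, φ i ∈ S) ∧ (∀ s ∈ S, ψ s ∈ Set.Icc 1 #S) ∧
      (∀ s ∈ S, φ (ψ s) = s) ∧ (∀ i ∈ Set.Icc 1 #S, ψ (φ i) = i) := by
  classical
  let φ : ℕ → α := fun i => if h : 1 ≤ i ∧ i ≤ #S then
    S.orderEmbOfFin rfl ⟨i - 1, by omega⟩ else default
  have hφ : StrictMonoOn φ (Set.Icc 1 #S) := by
    intro i hi j hj hij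
    simp only [Set.mem_Icc] at hi hj
    simp only [φ, dif_pos hi, dif_pos hj]
    rw [OrderEmbedding.lt_iff_lt, Fin.mk_lt_mk]
    omega
  have hs : ∀ s ∈ S, ∃ i ∈ Set.Icc 1 #S, φ i = s := by
    intro s hs
    have : s ∈ Set.range (S.orderEmbOfFin rfl) := by simpa using hs
    obtain ⟨⟨i, hi⟩, rfl⟩ := this
    refine ⟨i + 1, ⟨by omega, by omega⟩, ?_⟩
    simp only [φ]
    rw [dif_pos ⟨by omega, by omega⟩]
    simp
  have hm : ∀ i ∈ Set.Icc 1 #S, φ i ∈ S := by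
    intro i hi
    simp only [Set.mem_Icc] at hi
    simp only [φ, dif_pos hi]
    exact orderEmbOfFin_mem _ _ _
  refine ⟨φ, Function.invFunOn φ (Set.Icc 1 #S), hφ, hm,
    fun s h => Function.invFunOn_mem (hs s h), fun s h => Function.invFunOn_eq (hs s h), ?_⟩
  intro i hi
  exact hφ.injOn (Function.invFunOn_mem ⟨i, hi, rfl⟩) hi (Function.invFunOn_eq ⟨i, hi, rfl⟩)

lemma sum_transport {R : Type*} [AddCommMonoid R] (A B : Finset (List ℤ)) (φ ψ : ℤ → ℤ)
    (f g : List ℤ → R)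
    (h1 : ∀ l ∈ A, l.map φ ∈ B) (h2 : ∀ l ∈ B, l.map ψ ∈ A)
    (h3 : ∀ l ∈ A, ∀ z ∈ l, ψ (φ z) = z) (h4 : ∀ l ∈ B, ∀ z ∈ l, φ (ψ z) = z)
    (hfg : ∀ l ∈ A, f l = g (l.map φ)) : ∑ l ∈ A, f l = ∑ l ∈ B, g l := by
  refine Finset.sum_nbij' (fun l => l.map φ) (fun l => l.map ψ) h1 h2 ?_ ?_ hfg
  · intro l hl
    rw [List.map_map]
    conv_rhs => rw [← List.map_id l]
    exact List.map_congr_left (fun z hz => h3 l hl z hz)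
  · intro l hl
    rw [List.map_map]
    conv_rhs => rw [← List.map_id l]
    exact List.map_congr_left (fun z hz => h4 l hl z hz)

lemma LS_sum (S : Finset ℤ) :
    ∑ l ∈ LS (Icc 1 (#S : ℤ)), (X : ℤ[X]) ^ ch l = ∑ l ∈ LS S, (X : ℤ[X]) ^ ch l := by
  obtain ⟨φ, ψ, hm, h1, h2, h3, h4⟩ := exists_mono S
  have hI : ∀ z ∈ Icc 1 (#S : ℤ), z.toNat ∈ Set.Icc 1 #S := by
    intro z hz; simp at hz ⊢; omega
  have hl : ∀ l ∈ LS (Icc 1 (#S : ℤ)), ∀ z ∈ l, z ∈ Icc 1 (#S : ℤ) :=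
    fun l hl z hz => ((mem_LS.1 hl).2 z).1 hz
  refine sum_transport _ _ (fun z => φ z.toNat) (fun z => (ψ z : ℤ)) _ _ ?_ ?_ ?_ ?_ ?_
  · intro l h
    have hl := hl l h
    rw [mem_LS] at h ⊢
    refine ⟨List.Nodup.map_on ?_ h.1, fun i => ?_⟩
    · intro a ha b hb hab
      have hab := hm.injOn (hI _ (hl _ ha)) (hI _ (hl _ hb)) hab
      have := hl _ ha
      have := hl _ hb
      simp at *
      omega
    · rw [List.mem_map]
      constructor
      · rintro ⟨z, hz, rfl⟩
        exact h1 _ (hI _ (hl _ hz))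
      · intro hi
        refine ⟨ψ i, (h.2 _).2 ?_, by simpa using h3 i hi⟩
        have := h2 i hi
        simp at this ⊢; omega
  · intro l h
    rw [mem_LS] at h ⊢
    refine ⟨List.Nodup.map_on ?_ h.1, fun i => ?_⟩
    · intro a ha b hb hab
      rw [← h3 a ((h.2 a).1 ha), ← h3 b ((h.2 b).1 hb)]
      congr 1
      exact_mod_cast hab
    · rw [List.mem_map]
      constructor
      · rintro ⟨z, hz, rfl⟩
        have := h2 _ ((h.2 z).1 hz)
        simp at this ⊢; omega
      · intro hi
        refine ⟨φ i.toNat, (h.2 _).2 (h1 _ (hI _ hi)), ?_⟩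
        rw [h4 _ (hI _ hi)]
        simp at hi; omega
  · intro l h z hz
    have := hl l h z hz
    rw [h4 _ (hI _ this)]
    simp at this; omega
  · intro l h z hz
    simpa using h3 z (((mem_LS.1 h).2 z).1 hz)
  · intro l h
    rw [ch_map (D := ((Icc 1 (#S : ℤ) : Finset ℤ) : Set ℤ)) _ l (fun z hz => hl l h z hz)]
    intro a ha b hb hab
    refine hm (hI _ ha) (hI _ hb) ?_
    simp at ha hb
    omega

/-- odd extension -/
def odd (e : ℕ → ℕ) (z : ℤ) : ℤ := if z < 0 then -(e z.natAbs : ℤ) else e z.natAbs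

lemma natAbs_odd (e : ℕ → ℕ) (z : ℤ) : (odd e z).natAbs = e z.natAbs := by
  unfold odd; split_ifs <;> simp

/-- The half sum. -/
noncomputable def H (P : Finset ℕ) : ℤ[X] :=
  ∑ u ∈ SL P, if 0 < u.headI then X ^ ch (0 :: u) else 0

lemma SL_map (e e' : ℕ → ℕ) (P Q : Finset ℕ) (h1 : ∀ i ∈ P, e i ∈ Q) (h2 : ∀ i ∈ Q, e' i ∈ P)
    (h3 : ∀ i ∈ P, e' (e i) = i) (h4 : ∀ i ∈ Q, e (e' i) = i) (l : List ℤ) (h : l ∈ SL P) :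
    l.map (odd e) ∈ SL Q := by
  rw [mem_SL] at h ⊢
  have : (l.map (odd e)).map Int.natAbs = (l.map Int.natAbs).map e := by
    simp [natAbs_odd]
  rw [this]
  refine ⟨List.Nodup.map_on ?_ h.1, fun i => ?_⟩
  · intro a ha b hb hab
    rw [← h3 a ((h.2 a).1 ha), ← h3 b ((h.2 b).1 hb), hab]
  · rw [List.mem_map]
    constructor
    · rintro ⟨j, hj, rfl⟩
      exact h1 _ ((h.2 j).1 hj)
    · intro hi
      exact ⟨e' i, (h.2 _).2 (h2 _ hi), h4 _ hi⟩

lemma odd_odd (e e' : ℕ → ℕ) (P Q : Finset ℕ) (hQ : 0 ∉ Q) (h1 : ∀ i ∈ P, e i ∈ Q)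
    (h3 : ∀ i ∈ P, e' (e i) = i) (z : ℤ) (hz : z.natAbs ∈ P) : odd e' (odd e z) = z := by
  have h0 : e z.natAbs ≠ 0 := fun h => hQ (h ▸ h1 _ hz)
  have := h3 _ hz
  unfold odd
  split_ifs <;> grind

lemma H_card (P : Finset ℕ) (hP : 0 ∉ P) : H (Icc 1 #P) = H P := by
  obtain ⟨φ, ψ, hm, h1, h2, h3, h4⟩ := exists_mono P
  have hI : 0 ∉ Icc 1 #P := by simp
  have h1 : ∀ i ∈ Icc 1 #P, φ i ∈ P := fun i hi => h1 i (by simpa using hi)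
  have h2 : ∀ i ∈ P, ψ i ∈ Icc 1 #P := fun i hi => by simpa using h2 i hi
  have h4 : ∀ i ∈ Icc 1 #P, ψ (φ i) = i := fun i hi => h4 i (by simpa using hi)
  have hl : ∀ {P : Finset ℕ}, ∀ l ∈ SL P, ∀ z ∈ l, z.natAbs ∈ P :=
    fun l hl z hz => ((mem_SL.1 hl).2 _).1 (List.mem_map_of_mem hz)
  unfold H
  refine sum_transport _ _ (odd φ) (odd ψ) _ _ (SL_map φ ψ _ _ h1 h2 h4 h3)
    (SL_map ψ φ _ _ h2 h1 h3 h4) (fun l h z hz => odd_odd φ ψ _ _ hP h1 h4 z (hl l h z hz))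
    (fun l h z hz => odd_odd ψ φ _ _ hI h2 h3 z (hl l h z hz)) ?_
  intro l h
  let ρ : ℤ → ℤ := fun z => if z = 0 then 0 else odd φ z
  have hpos : ∀ i ∈ Icc 1 #P, 0 < φ i := fun i hi =>
    Nat.pos_of_ne_zero (fun h0 => hP (h0 ▸ h1 i hi))
  have hρ : StrictMonoOn ρ {z | z = 0 ∨ z.natAbs ∈ Icc 1 #P} := by
    intro a ha b hb hab
    simp only [Set.mem_setOf_eq] at ha hb
    have hpa := hpos a.natAbs
    have hpb := hpos b.natAbs
    have mab : a.natAbs ∈ Icc 1 #P → b.natAbs ∈ Icc 1 #P → a.natAbs < b.natAbs →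
      φ a.natAbs < φ b.natAbs := fun x y => hm (by simpa using x) (by simpa using y)
    have mba : a.natAbs ∈ Icc 1 #P → b.natAbs ∈ Icc 1 #P → b.natAbs < a.natAbs →
      φ b.natAbs < φ a.natAbs := fun x y => hm (by simpa using y) (by simpa using x)
    simp only [ρ, odd]
    generalize φ a.natAbs = A at *
    generalize φ b.natAbs = B at *
    split_ifs <;> grind
  have e1 : ch (0 :: l.map (odd φ)) = ch (0 :: l) := by
    rw [← ch_map hρ (0 :: l)]
    · congr 1
      simp only [List.map_cons]
      congr 1
      refine List.map_congr_left (fun z hz => ?_)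
      have : z ≠ 0 := by
        rintro rfl
        exact hI (by simpa using hl l h 0 hz)
      simp [ρ, this]
    · intro z hz
      rcases List.mem_cons.1 hz with hz | hz
      · exact Or.inl hz
      · exact Or.inr (hl l h z hz)
  rw [e1]
  congr 1
  match l with
  | [] => simp
  | a :: l =>
    have := hpos _ (hl _ h a (by simp))
    have ha := hl _ h a (by simp)
    simp only [List.headI_cons, List.map_cons, odd]
    simp only [mem_Icc] at ha
    apply propext
    split_ifs <;> omega

lemma H_neg (P : Finset ℕ) :
    ∑ u ∈ SL P, (if u.headI < 0 then (X : ℤ[X]) ^ ch (0 :: u) else 0) = H P := by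
  have hm : ∀ l ∈ SL P, l.map (fun z => -z) ∈ SL P := by
    intro l h
    rw [mem_SL] at h ⊢
    have : (l.map (fun z => -z)).map Int.natAbs = l.map Int.natAbs := by simp
    rwa [this]
  refine sum_transport _ _ (fun z => -z) (fun z => -z) _ _ hm hm (by simp) (by simp) ?_
  intro l h
  have : ch (0 :: l.map (fun z => -z)) = ch (0 :: l) := by
    rw [← ch_neg (0 :: l)]; simp
  rw [this]
  congr 1
  cases l <;> simp

lemma mem_pos {P : Finset ℕ} (hP : 0 ∉ P) (hne : P.Nonempty) {u : List ℤ} (hu : u ∈ SL P) :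
    ∃ a u', u = a :: u' ∧ a ≠ 0 := by
  have hu' := mem_SL.1 hu
  match u with
  | [] =>
    obtain ⟨i, hi⟩ := hne
    simpa using (hu'.2 i).2 hi
  | a :: u' =>
    refine ⟨a, u', rfl, ?_⟩
    rintro rfl
    exact hP ((hu'.2 0).1 (by simp))

lemma full_sum (P : Finset ℕ) (hP : 0 ∉ P) (hne : P.Nonempty) :
    ∑ u ∈ SL P, (X : ℤ[X]) ^ ch (0 :: u) = 2 * H P := by
  rw [two_mul]
  nth_rw 2 [← H_neg]
  unfold H
  rw [← sum_add_distrib]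
  refine sum_congr rfl (fun u hu => ?_)
  obtain ⟨a, u', rfl, ha⟩ := mem_pos hP hne hu
  simp only [List.headI_cons]
  rcases lt_or_gt_of_ne ha with h | h
  · simp [h, h.le, h.not_gt]
  · simp [h, h.le, h.not_gt]

lemma glue_sum (P Q : Finset ℕ) (hP : 0 ∉ P) (hneP : P.Nonempty) (hQ : 0 ∉ Q)
    (hneQ : Q.Nonempty) :
    ∑ u ∈ SL P, ∑ v ∈ SL Q, (X : ℤ[X]) ^ ch (u.reverse ++ 0 :: v) =
      2 * (1 + X) * H P * H Q := by
  have e : ∀ u ∈ SL P, ∀ v ∈ SL Q, (X : ℤ[X]) ^ ch (u.reverse ++ 0 :: v) =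
      (if 0 < u.headI then X ^ ch (0 :: u) else 0) * (if 0 < v.headI then X ^ ch (0 :: v) else 0) * X
      + (if u.headI < 0 then X ^ ch (0 :: u) else 0) * (if v.headI < 0 then X ^ ch (0 :: v) else 0)
        * X
      + (if 0 < u.headI then X ^ ch (0 :: u) else 0) * (if v.headI < 0 then X ^ ch (0 :: v) else 0)
      + (if u.headI < 0 then X ^ ch (0 :: u) else 0)
        * (if 0 < v.headI then X ^ ch (0 :: v) else 0) := by
    intro u hu v hv
    obtain ⟨a, u, rfl, ha⟩ := mem_pos hP hneP hu
    obtain ⟨b, v, rfl, hb⟩ := mem_pos hQ hneQ hv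
    rw [ch_glue]
    simp only [List.headI_cons]
    rcases lt_or_gt_of_ne ha with h | h <;> rcases lt_or_gt_of_ne hb with h' | h' <;>
      simp [h, h.le, h.not_gt, h', h'.le, h'.not_gt, bump, pow_add]
  rw [sum_congr rfl (fun u hu => sum_congr rfl (fun v hv => e u hu v hv))]
  simp only [sum_add_distrib, ← sum_mul, ← mul_sum, H_neg]
  change H P * H Q * X + H P * H Q * X + H P * H Q + H P * H Q = _
  ring

lemma SL_empty : SL ∅ = {[]} := by
  ext l
  rw [mem_SL]
  cases l with
  | nil => simp
  | cons a l =>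
    simp only [List.map_cons, mem_singleton, reduceCtorEq, iff_false, not_and]
    intro _ h
    simpa using (h a.natAbs).1 (by simp)

lemma main_H (n : ℕ) (hn : 1 ≤ n) :
    2 ^ n * ∑ l ∈ LS (Icc 1 ((n + 1 : ℕ) : ℤ)), (X : ℤ[X]) ^ ch l =
      4 * H (Icc 1 n) + 2 * (1 + X) * ∑ k ∈ Icc 1 (n - 1),
        (n.choose k : ℤ[X]) * H (Icc 1 k) * H (Icc 1 (n - k)) := by
  have e1 := sum_signs n (fun l => (X : ℤ[X]) ^ ch l)
  rw [← sum_split] at e1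
  have c : ∀ T, #((range (n + 1)).image (sT T)) = n + 1 := fun T => by
    rw [card_image_of_injective _ (sT_injective T), card_range]
  have e2 : ∀ T ∈ (Icc 1 n).powerset, ∑ l ∈ LS ((range (n + 1)).image (sT T)), (X : ℤ[X]) ^ ch l
      = ∑ l ∈ LS (Icc 1 ((n + 1 : ℕ) : ℤ)), (X : ℤ[X]) ^ ch l := by
    intro T _
    rw [← LS_sum, c]
  rw [sum_congr rfl e2, sum_const, card_powerset] at e1
  simp only [Nat.card_Icc, Nat.add_sub_cancel, nsmul_eq_mul, Nat.cast_pow, Nat.cast_ofNat] at e1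
  rw [e1]
  let F : ℕ → ℤ[X] := fun k => if k = 0 ∨ k = n then 2 * H (Icc 1 n) else
    2 * (1 + X) * H (Icc 1 k) * H (Icc 1 (n - k))
  have e3 : ∀ P ∈ (Icc 1 n).powerset, ∑ u ∈ SL P, ∑ v ∈ SL (Icc 1 n \ P),
      (X : ℤ[X]) ^ ch (u.reverse ++ 0 :: v) = F #P := by
    intro P hP
    rw [mem_powerset] at hP
    have h0 : 0 ∉ Icc 1 n := by simp
    have hne : (Icc 1 n).Nonempty := by simpa using hn
    rcases P.eq_empty_or_nonempty with rfl | hP0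
    · simp [SL_empty, F, full_sum _ h0 hne]
    rcases (Icc 1 n \ P).eq_empty_or_nonempty with hQ | hQ0
    · have : P = Icc 1 n := subset_antisymm hP (sdiff_eq_empty_iff_subset.1 hQ)
      subst this
      rw [hQ, SL_empty]
      simp only [sum_singleton]
      have : ∀ u : List ℤ, ch (u.reverse ++ [0]) = ch (0 :: u) := fun u => by
        rw [← ch_reverse (0 :: u)]; simp
      simp [F, this, full_sum _ h0 hne]
    · have hQ : 0 ∉ Icc 1 n \ P := fun h => h0 (sdiff_subset h)
      have cQ : #(Icc 1 n \ P) = n - #P := by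
        rw [card_sdiff_of_subset hP]; simp
      have p1 := hP0.card_pos
      have p2 := hQ0.card_pos
      rw [glue_sum _ _ (fun h => h0 (hP h)) hP0 hQ hQ0, ← H_card P (fun h => h0 (hP h)),
        ← H_card _ hQ, cQ]
      simp only [F]
      rw [if_neg (by omega)]
  rw [sum_congr rfl e3, sum_powerset_apply_card]
  simp only [Nat.card_Icc, Nat.add_sub_cancel]
  have r : range (n + 1) = insert 0 (insert n (Icc 1 (n - 1))) := by
    ext i; simp; omega
  rw [r, sum_insert (by simp; omega), sum_insert (by simp; omega)]
  have e4 : ∀ k ∈ Icc 1 (n - 1), n.choose k • F k = 2 * (1 + X) *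
      ((n.choose k : ℤ[X]) * H (Icc 1 k) * H (Icc 1 (n - k))) := by
    intro k hk
    simp only [mem_Icc] at hk
    simp only [F]
    rw [if_neg (by omega), nsmul_eq_mul]; ring
  rw [sum_congr rfl e4, ← mul_sum]
  simp [F]
  ring

lemma permWord_at {m : ℕ} (σ : Equiv.Perm (Fin m)) (i : Fin m) :
    permWord m σ (i + 1) = (σ i : ℕ) + 1 := by
  unfold permWord
  rw [dif_pos ⟨by omega, by omega⟩]
  simp

lemma signedWord_at {m : ℕ} (π : SignedPerm m) (i : Fin m) :
    signedWord m π (i + 1) = if π.2 i then -(((π.1 i : ℕ) : ℤ) + 1) else (π.1 i : ℕ) + 1 := by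
  unfold signedWord
  rw [dif_pos ⟨by omega, by omega⟩]
  simp

lemma range'_map {α : Type*} (m : ℕ) (w : ℕ → α) :
    (List.range' 1 m).map w = List.ofFn (fun i : Fin m => w (i + 1)) := by
  apply List.ext_getElem
  · simp
  · intro i h1 h2; simp [add_comm]

lemma runPoly_eq (m : ℕ) (hm : 1 ≤ m) :
    runPoly m = X * ∑ l ∈ LS (Icc 1 (m : ℤ)), (X : ℤ[X]) ^ ch l := by
  unfold runPoly
  rw [mul_sum]
  refine Finset.sum_bij (fun σ _ => (List.range' 1 m).map (permWord m σ)) ?_ ?_ ?_ ?_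
  · intro σ _
    rw [mem_LS, range'_map, List.nodup_ofFn]
    refine ⟨fun i j h => ?_, fun z => ?_⟩
    · simp only [permWord_at] at h
      apply σ.injective
      apply Fin.ext; omega
    · simp only [List.mem_ofFn, permWord_at, mem_Icc]
      constructor
      · rintro ⟨i, rfl⟩
        have := (σ i).2
        omega
      · rintro ⟨h1, h2⟩
        refine ⟨σ.symm ⟨(z - 1).toNat, by omega⟩, ?_⟩
        simp; omega
  · intro σ _ τ _ h
    simp only [range'_map, List.ofFn_inj] at h
    ext i
    have := congrFun h i
    simp only [permWord_at] at this
    omega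
  · intro l hl
    rw [mem_LS] at hl
    have hlen : l.length = m := by
      rw [← List.toFinset_card_of_nodup hl.1]
      have : l.toFinset = Icc 1 (m : ℤ) := by ext z; simp [hl.2]
      rw [this]; simp
    have hb : ∀ i : Fin m, 1 ≤ l[i] ∧ l[i] ≤ m := fun i => by
      simpa using (hl.2 _).1 (List.getElem_mem (by omega : i.1 < l.length))
    let f : Fin m → Fin m := fun i => ⟨(l[i] - 1).toNat, by have := hb i; omega⟩
    have hf : Function.Injective f := by
      intro i j hij
      have h1 := hb i
      have h2 := hb j
      simp only [f, Fin.mk.injEq] at hij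
      have h3 : l[i] = l[j] := by omega
      exact Fin.ext ((hl.1.getElem_inj_iff).1 h3)
    refine ⟨Equiv.ofBijective f (Finite.injective_iff_bijective.1 hf), mem_univ _, ?_⟩
    rw [range'_map]
    apply List.ext_getElem
    · simp [hlen]
    · intro i h1 h2
      simp only [List.getElem_ofFn, permWord_at]
      have := hb ⟨i, by omega⟩
      simp [f] at this ⊢
      omega
  · intro σ _
    have e1 : 1 + m - 2 = m - 1 := by omega
    rw [ch_range', runA, pow_add, pow_one, e1]

lemma runPolyBgt_eq (k : ℕ) : runPolyBgt k = X * H (Icc 1 k) := by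
  unfold runPolyBgt H
  rw [mul_sum]
  refine Finset.sum_bij (fun π _ => (List.range' 1 k).map (signedWord k π)) ?_ ?_ ?_ ?_
  · intro π _
    have e : ∀ i, (signedWord k π (i.1 + 1)).natAbs = (π.1 i : ℕ) + 1 := by
      intro i
      rw [signedWord_at]; split_ifs <;> omega
    rw [mem_SL, range'_map, List.map_ofFn, List.nodup_ofFn]
    refine ⟨fun i j h => ?_, fun z => ?_⟩
    · simp only [Function.comp, e] at h
      apply π.1.injective
      apply Fin.ext; omega
    · simp only [List.mem_ofFn, Function.comp, e, mem_Icc]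
      constructor
      · rintro ⟨i, rfl⟩
        have := (π.1 i).2
        omega
      · rintro ⟨h1, h2⟩
        refine ⟨π.1.symm ⟨z - 1, by omega⟩, ?_⟩
        simp; omega
  · intro π _ τ _ h
    simp only [range'_map, List.ofFn_inj] at h
    have key : ∀ i, π.1 i = τ.1 i ∧ π.2 i = τ.2 i := by
      intro i
      have := congrFun h i
      simp only [signedWord_at] at this
      rcases h1 : π.2 i <;> rcases h2 : τ.2 i <;> simp [h1, h2] at this ⊢ <;> omega
    apply Prod.ext
    · ext i; rw [(key i).1]
    · ext i; rw [(key i).2]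
  · intro l hl
    have hl' := mem_SL.1 hl
    have hlen : l.length = k := by
      rw [← List.length_map Int.natAbs, ← List.toFinset_card_of_nodup hl'.1]
      have : (l.map Int.natAbs).toFinset = Icc 1 k := by
        ext z; rw [List.mem_toFinset, hl'.2]
      rw [this]; simp
    have hb : ∀ i : Fin k, 1 ≤ (l[i]).natAbs ∧ (l[i]).natAbs ≤ k := fun i => by
      simpa using (hl'.2 _).1 (List.mem_map_of_mem (List.getElem_mem (by omega : i.1 < l.length)))
    let f : Fin k → Fin k := fun i => ⟨(l[i]).natAbs - 1, by have := hb i; omega⟩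
    have hf : Function.Injective f := by
      intro i j hij
      have h1 := hb i
      have h2 := hb j
      simp only [f, Fin.mk.injEq] at hij
      have h3 : l[i] = l[j] := inj_of_mem_SL hl (List.getElem_mem _) (List.getElem_mem _) (by omega)
      exact Fin.ext ((hl'.1.of_map.getElem_inj_iff).1 h3)
    refine ⟨(Equiv.ofBijective f (Finite.injective_iff_bijective.1 hf),
      fun i => decide (l[i] < 0)), mem_univ _, ?_⟩
    rw [range'_map]
    apply List.ext_getElem
    · simp [hlen]
    · intro i h1 h2
      simp only [List.getElem_ofFn, signedWord_at]
      have := hb ⟨i, by omega⟩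
      simp [f] at this ⊢
      split_ifs <;> omega
  · intro π _
    have h0 : (0 : ℤ) :: (List.range' 1 k).map (signedWord k π) =
        (List.range' 0 (k + 1)).map (signedWord k π) := by
      rw [List.range'_succ]
      simp [signedWord]
    have hh : ((List.range' 1 k).map (signedWord k π)).headI = signedWord k π 1 := by
      cases k with
      | zero => simp [signedWord]
      | succ k => simp [List.range'_succ]
    have e1 : 0 + (k + 1) - 2 = k - 1 := by omega
    rw [h0, hh, ch_range', runB, pow_add, pow_one, e1]
    simp only [mul_ite, mul_zero, zero_add]

end CM

/-- Chow–Ma identity: For `n ≥ 1`,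
`x · 2^{n−1} R_{n+1}(x) = 2x R_n^{B,>}(x) + (1+x) Σ_{k=1}^{n−1} C(n,k) R_k^{B,>}(x) R_{n−k}^{B,>}(x)`. -/
theorem statement18 (n : ℕ) (hn : 1 ≤ n) :
    X * 2 ^ (n - 1) * runPoly (n + 1) =
      2 * X * runPolyBgt n +
        (1 + X) * ∑ k ∈ Finset.Icc 1 (n - 1),
          (n.choose k : Polynomial ℤ) * runPolyBgt k * runPolyBgt (n - k) := by
  obtain ⟨m, rfl⟩ : ∃ m, n = m + 1 := ⟨n - 1, by omega⟩
  have h := CM.main_H (m + 1) hn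
  have h2 : (2 : ℤ[X]) ≠ 0 := by norm_num
  apply mul_left_cancel₀ h2
  rw [CM.runPoly_eq _ (by omega)]
  simp only [CM.runPolyBgt_eq]
  have e : ∀ k, ((m + 1).choose k : ℤ[X]) * (X * CM.H (Icc 1 k)) * (X * CM.H (Icc 1 (m + 1 - k))) =
      X ^ 2 * (((m + 1).choose k : ℤ[X]) * CM.H (Icc 1 k) * CM.H (Icc 1 (m + 1 - k))) := by
    intro k; ring
  simp only [e, ← mul_sum]
  simp only [Nat.add_sub_cancel] at h ⊢
  linear_combination X ^ 2 * h
end
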